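/- Let c ∈ (0, c_crit), let c̄ ∈ (0, c] and set A := 2√2·m, B := c̄²·√m·min{1, (1 - 1/(3√2))/(8m^{3/2})}, δ := √(e·m·(c_crit² - c²)), and let C > 0 be any constant with (1-h²)² - h³ ≥ C for all h ∈ [-1,0]. If h : [0, s₁] → [-1, 0] solves the transformed Jang equation dh/ds = F_c(s, h(s)) with h(0) = 0 on an interval [0, s₁] ⊆ [0, 1/(3√2)], then h(s) ≤ (B·C/A)·log(δ/(A·s + δ)) for all s ∈ [0, s₁]. -/

import Mathlib

/-- The function `φ(r) = e^{r/(2m)-1}(r - 2m)` defining the Kruskal radius implicitly. -/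
noncomputable def phi (m r : ℝ) : ℝ := Real.exp (r / (2*m) - 1) * (r - 2*m)

/-- The derivative `φ_r(r) = (r/(2m)) e^{r/(2m)-1}`. -/
noncomputable def phiR (m r : ℝ) : ℝ := (r / (2*m)) * Real.exp (r / (2*m) - 1)

/-- The critical parameter `c_crit = √(8m/e)`. -/
noncomputable def cCrit (m : ℝ) : ℝ := Real.sqrt (8*m / Real.exp 1)

/-- The right-hand side of Jang's equation on the slice `L_c`:
`f''(u) = jangRHS m c u r (f'(u))` where `r = r(u)` solves `φ(r) = u(u+c)`. -/
noncomputable def jangRHS (m c u r p : ℝ) : ℝ :=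
  c * Real.sqrt (2*m / phiR m r + p^2/4) *
      ((1 / phiR m r) * (1/(2*m) - 3/r) - p^2/(2*m*r))
    - ((2*u + c)/(4*m*r)) * p^3
    - ((2*u + c)/(2 * phiR m r)) * (1/(2*m) + 5/r) * p

/-- The right-hand side `F_c(s,h)` of the transformed Jang equation,
with `r = r_c(s)` solving `φ(r) = (c²/4)(s²-1)`. -/
noncomputable def Fc (m c s r h : ℝ) : ℝ :=
  (c^2/2) * Real.sqrt (2*m*(1 - h^2) / phiR m r + h^2/4) *
      (((1 - h^2) / phiR m r) * (1/(2*m) - 3/r) - h^2/(2*m*r))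
    - (c^2*s/(8*m*r)) * h^3
    - (c^2*s/(4 * phiR m r)) * (1/(2*m) + 5/r) * (h*(1 - h^2))

lemma exp_mul_one_sub_le {x : ℝ} (hx0 : 0 ≤ x) (hx1 : x ≤ 1) :
    Real.exp x * (1 - x) ≤ 1 - x ^ 2 / 2 := by
  have hexp := Real.exp_bound' hx0 hx1 (n := 3) (by norm_num)
  norm_num [Finset.sum_range_succ, Nat.factorial] at hexp
  have hmul := mul_le_mul_of_nonneg_right hexp (sub_nonneg.2 hx1)
  have h3 : 0 ≤ x ^ 3 := by positivity
  have h4 : 0 ≤ x ^ 4 := by positivity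
  nlinarith

lemma lt_two_mul_of_phi_neg {m r : ℝ} (h : phi m r < 0) : r < 2 * m := by
  by_contra! hr
  exact absurd h (not_lt.2 (mul_nonneg (Real.exp_pos _).le (sub_nonneg.2 hr)))

lemma phiR_pos {m r : ℝ} (hm : 0 < m) (hr : 0 < r) : 0 < phiR m r := by
  unfold phiR; positivity

lemma phiR_le_one {m r : ℝ} (hm : 0 < m) (hr2 : r ≤ 2 * m) : phiR m r ≤ 1 := by
  have hx : r / (2 * m) ≤ 1 := (div_le_one (by positivity)).2 hr2
  exact mul_le_one₀ hx (Real.exp_pos _).le (Real.exp_le_one_iff.2 (by linarith))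

lemma exp_one_mul_sq_lt {m c : ℝ} (hc0 : 0 < c) (hc : c < cCrit m) :
    Real.exp 1 * c ^ 2 < 8 * m := by
  have h := (Real.lt_sqrt hc0.le).1 hc
  rw [lt_div_iff₀ (Real.exp_pos 1)] at h
  linarith

lemma exp_one_mul_cCrit_sq_sub {m : ℝ} (hm : 0 < m) (c : ℝ) :
    Real.exp 1 * m * (cCrit m ^ 2 - c ^ 2) = 8 * m ^ 2 - Real.exp 1 * m * c ^ 2 := by
  have hE := (Real.exp_pos 1).ne'
  rw [cCrit, Real.sq_sqrt (by positivity)]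
  field_simp

/-- The Kruskal radius is at most `2√2 m s + δ`, where `δ = √(e m (c_crit² - c²))`. -/
lemma radius_le {m c s r : ℝ} (hm : 0 < m) (hc0 : 0 < c) (hc : c < cCrit m) (hs : 0 ≤ s)
    (hr : 0 < r) (hr2 : r ≤ 2 * m) (hphi : phi m r = c ^ 2 / 4 * (s ^ 2 - 1)) :
    r ≤ 2 * √2 * m * s + √(Real.exp 1 * m * (cCrit m ^ 2 - c ^ 2)) := by
  have hcE := exp_one_mul_sq_lt hc0 hc
  rw [exp_one_mul_cCrit_sq_sub hm]
  set E := Real.exp 1 with hE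
  have hE0 : 0 < E := Real.exp_pos 1
  have hδ : 0 ≤ 8 * m ^ 2 - E * m * c ^ 2 := by nlinarith
  set δ := √(8 * m ^ 2 - E * m * c ^ 2) with hδdef
  have hδ0 : 0 ≤ δ := Real.sqrt_nonneg _
  have hδsq : δ ^ 2 = 8 * m ^ 2 - E * m * c ^ 2 := Real.sq_sqrt hδ
  have h2 : √2 ^ 2 = (2 : ℝ) := Real.sq_sqrt (by norm_num)
  obtain ⟨x, rfl⟩ : ∃ x, r = 2 * m * x := ⟨r / (2 * m), by field_simp⟩
  have hx0 : 0 < x := pos_of_mul_pos_right hr (by positivity)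
  have hx1 : x ≤ 1 := by nlinarith
  have key := exp_mul_one_sub_le hx0.le hx1
  have hphi' : Real.exp x * (1 - x) * (8 * m) = E * c ^ 2 * (1 - s ^ 2) := by
    rw [phi, mul_div_cancel_left₀ _ (by positivity), Real.exp_sub, ← hE] at hphi
    field_simp at hphi
    linarith
  have hkey := mul_le_mul_of_nonneg_right key (by positivity : 0 ≤ 8 * m ^ 2)
  have hphim : Real.exp x * (1 - x) * (8 * m ^ 2) = m * (E * c ^ 2 * (1 - s ^ 2)) := by
    rw [← hphi']; ring
  have hcs : m * s ^ 2 * (E * c ^ 2) ≤ m * s ^ 2 * (8 * m) :=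
    mul_le_mul_of_nonneg_left hcE.le (by positivity)
  have hcross : 0 ≤ √2 * m * s * δ := by positivity
  refine le_of_sq_le_sq ?_ (by positivity)
  have hexpand : (2 * √2 * m * s + δ) ^ 2
      = 4 * √2 ^ 2 * m ^ 2 * s ^ 2 + 4 * (√2 * m * s * δ) + δ ^ 2 := by ring
  rw [hexpand, h2, hδsq]
  linarith

/-- The square root in `Fc` dominates `√m (1 - h²) + |h| / (2√2)`. -/
lemma add_le_sqrt_jang {m p y : ℝ} (hm : 0 < m) (hp : 0 < p) (hp1 : p ≤ 1)
    (hy0 : 0 ≤ y) (hy1 : y ≤ 1) :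
    √m * (1 - y ^ 2) + y / (2 * √2) ≤ √(2 * m * (1 - y ^ 2) / p + y ^ 2 / 4) := by
  have ha0 : 0 ≤ 1 - y ^ 2 := by nlinarith
  have hw : √m ^ 2 = m := Real.sq_sqrt hm.le
  have h2 : √2 ^ 2 = (2 : ℝ) := Real.sq_sqrt (by norm_num)
  have hdiv : 2 * m * (1 - y ^ 2) ≤ 2 * m * (1 - y ^ 2) / p :=
    le_div_self (by positivity) hp hp1
  have hz : (y / (2 * √2)) ^ 2 = y ^ 2 / 8 := by
    rw [div_pow, mul_pow, h2]; norm_num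
  have haa : m * (1 - y ^ 2) ^ 2 ≤ m * (1 - y ^ 2) :=
    mul_le_mul_of_nonneg_left (by nlinarith [sq_nonneg y]) hm.le
  have hwa : (√m * (1 - y ^ 2)) ^ 2 = m * (1 - y ^ 2) ^ 2 := by rw [mul_pow, hw]
  refine Real.le_sqrt_of_sq_le ?_
  linarith [sq_nonneg (√m * (1 - y ^ 2) - y / (2 * √2)),
    add_sq (√m * (1 - y ^ 2)) (y / (2 * √2)), sub_sq (√m * (1 - y ^ 2)) (y / (2 * √2))]

lemma Fc_le {m s r h : ℝ} (c : ℝ) (hm : 0 < m) (hs : 0 ≤ s) (hs1 : s ≤ 1 / (3 * √2))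
    (hr : 0 < r) (hr2 : r ≤ 2 * m) (hh : h ∈ Set.Icc (-1 : ℝ) 0) :
    Fc m c s r h ≤ -(c ^ 2 * ((√m * (1 - h ^ 2) ^ 2 +
      (1 - 1 / (3 * √2)) / (8 * m) * (-h ^ 3)) / r)) := by
  obtain ⟨y, rfl⟩ : ∃ y, h = -y := ⟨-h, by ring⟩
  have hy0 : 0 ≤ y := by linarith [hh.2]
  have hy1 : y ≤ 1 := by linarith [hh.1]
  have hp := phiR_pos hm hr
  have hS := add_le_sqrt_jang hm hp (phiR_le_one hm hr2) hy0 hy1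
  have ha0 : 0 ≤ 1 - y ^ 2 := by nlinarith
  unfold Fc
  rw [neg_sq]
  set p := phiR m r
  have hp1 : p ≤ 1 := phiR_le_one hm hr2
  have hS' : y / 2 ≤ √(2 * m * (1 - y ^ 2) / p + y ^ 2 / 4) := by
    refine Real.le_sqrt_of_sq_le ?_
    have : 0 ≤ 2 * m * (1 - y ^ 2) / p := by positivity
    linarith [div_pow y 2 2]
  set S := √(2 * m * (1 - y ^ 2) / p + y ^ 2 / 4)
  set a := 1 - y ^ 2
  have hsq2 : s * (3 / 2) ≤ 1 / (2 * √2) := by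
    have : 1 / (2 * √2) = 1 / (3 * √2) * (3 / 2) := by field_simp
    rw [this]; linarith
  have hρ : 1 / (2 * m) ≤ 1 / r := one_div_le_one_div_of_le hr hr2
  have hk : 2 / r ≤ 3 / r - 1 / (2 * m) := by
    have : 3 / r - 2 / r = 1 / r := by ring
    linarith
  have hk' : 1 / (2 * m) + 5 / r ≤ 6 / r := by
    have : 6 / r - 5 / r = 1 / r := by ring
    linarith
  have hT0 : 0 ≤ √m * a + y / (2 * √2) := by positivity
  have t1 : (√m * a + y / (2 * √2)) * (a / p * (2 / r)) ≤
      S * (a / p * (3 / r - 1 / (2 * m))) :=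
    mul_le_mul hS (mul_le_mul_of_nonneg_left hk (by positivity)) (by positivity)
      (hT0.trans hS)
  have t2 : y / 2 * (y ^ 2 / (2 * m * r)) ≤ S * (y ^ 2 / (2 * m * r)) :=
    mul_le_mul_of_nonneg_right hS' (by positivity)
  have t3 : s / (4 * p) * (1 / (2 * m) + 5 / r) * (y * a) ≤ s / (4 * p) * (6 / r) * (y * a) := by
    gcongr
  have t4 : s * (3 / 2) * (y * a / p / r) ≤ 1 / (2 * √2) * (y * a / p / r) :=
    mul_le_mul_of_nonneg_right hsq2 (by positivity)
  have t5 : s * (y ^ 3 / (8 * m * r)) ≤ 1 / (3 * √2) * (y ^ 3 / (8 * m * r)) :=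
    mul_le_mul_of_nonneg_right hs1 (by positivity)
  have t6 : √m * a ^ 2 / r ≤ √m * a ^ 2 / r / p := le_div_self (by positivity) hp hp1
  have hmain : (√m * a ^ 2 + (1 - 1 / (3 * √2)) / (8 * m) * y ^ 3) / r ≤
      1 / 2 * (S * (a / p * (3 / r - 1 / (2 * m))) + S * (y ^ 2 / (2 * m * r)))
        - s * (y ^ 3 / (8 * m * r)) - s / (4 * p) * (1 / (2 * m) + 5 / r) * (y * a) := by
    have e1 : (√m * a ^ 2 + (1 - 1 / (3 * √2)) / (8 * m) * y ^ 3) / r =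
        √m * a ^ 2 / r + y ^ 3 / (8 * m * r) - 1 / (3 * √2) * (y ^ 3 / (8 * m * r)) := by
      field_simp; ring
    have e2 : (√m * a + y / (2 * √2)) * (a / p * (2 / r)) =
        2 * (√m * a ^ 2 / r / p) + 2 * (1 / (2 * √2) * (y * a / p / r)) := by
      field_simp
    have e3 : y / 2 * (y ^ 2 / (2 * m * r)) = 2 * (y ^ 3 / (8 * m * r)) := by
      field_simp; norm_num
    have e4 : s / (4 * p) * (6 / r) * (y * a) = s * (3 / 2) * (y * a / p / r) := by
      field_simp; ring
    linarith
  have hmul := mul_le_mul_of_nonneg_left hmain (sq_nonneg c)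
  have e5 : -(-y) ^ 3 = y ^ 3 := by ring
  rw [e5]
  refine le_trans (le_of_eq ?_) (neg_le_neg hmul)
  ring

lemma min_mul_le {m a b k : ℝ} (hm : 0 < m) (ha : 0 ≤ a) (hb : 0 ≤ b) :
    √m * min 1 (k / (8 * m ^ ((3 : ℝ) / 2))) * (a + b) ≤ √m * a + k / (8 * m) * b := by
  have hrpow : m ^ ((3 : ℝ) / 2) = m * √m := by
    rw [Real.sqrt_eq_rpow, ← Real.rpow_one_add' hm.le (by norm_num)]; norm_num
  have hw : 0 < √m := Real.sqrt_pos.2 hm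
  have h1 : √m * min 1 (k / (8 * m ^ ((3 : ℝ) / 2))) ≤ √m :=
    mul_le_of_le_one_right hw.le (min_le_left _ _)
  have h2 : √m * min 1 (k / (8 * m ^ ((3 : ℝ) / 2))) ≤ k / (8 * m) := by
    refine (mul_le_mul_of_nonneg_left (min_le_right _ _) hw.le).trans (le_of_eq ?_)
    rw [hrpow]; field_simp
  rw [mul_add]
  exact add_le_add (mul_le_mul_of_nonneg_right h1 ha) (mul_le_mul_of_nonneg_right h2 hb)

lemma le_log_of_hasDerivWithinAt_le {f f' : ℝ → ℝ} {A δ K T : ℝ} (hA : 0 < A) (hδ : 0 < δ)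
    (hf : ∀ s ∈ Set.Icc 0 T, HasDerivWithinAt f (f' s) (Set.Icc 0 T) s)
    (hf' : ∀ s ∈ Set.Icc 0 T, f' s ≤ -(K / (A * s + δ))) (h0 : f 0 = 0) :
    ∀ s ∈ Set.Icc 0 T, f s ≤ K / A * Real.log (δ / (A * s + δ)) := by
  intro s hs
  have hpos : ∀ t ∈ Set.Icc 0 T, 0 < A * t + δ := fun t ht => by
    have := mul_nonneg hA.le ht.1
    linarith
  have hderiv : ∀ t ∈ Set.Icc 0 T, HasDerivWithinAt
      (fun t => f t + K / A * Real.log (A * t + δ)) (f' t + K / A * (A / (A * t + δ)))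
      (Set.Icc 0 T) t := fun t ht => by
    have hlin : HasDerivWithinAt (fun t => A * t + δ) A (Set.Icc 0 T) t := by
      simpa using ((hasDerivWithinAt_id t (Set.Icc 0 T)).const_mul A).add_const δ
    exact (hf t ht).add ((hlin.log (hpos t ht).ne').const_mul (K / A))
  have hanti : AntitoneOn (fun t => f t + K / A * Real.log (A * t + δ)) (Set.Icc 0 T) := by
    refine antitoneOn_of_hasDerivWithinAt_nonpos (convex_Icc 0 T)
      (fun t ht => (hderiv t ht).continuousWithinAt)
      (fun t ht => (hderiv t (interior_subset ht)).mono interior_subset) fun t ht => ?_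
    have hle := hf' t (interior_subset ht)
    have heq : K / A * (A / (A * t + δ)) = K / (A * t + δ) := div_mul_div_cancel₀ hA.ne'
    linarith
  have hle := hanti ⟨le_rfl, hs.1.trans hs.2⟩ hs hs.1
  simp only [h0, mul_zero, zero_add] at hle
  rw [Real.log_div hδ.ne' (hpos s hs).ne', mul_sub]
  linarith

/-- Logarithmic upper bound for solutions of the transformed Jang equation
on `[0, s₁] ⊆ [0, 1/(3√2)]`: `h(s) ≤ (BC/A)·log(δ/(As + δ))`. -/
theorem h_logarithmic_bound (m c cbar s₁ C : ℝ) (hm : 0 < m)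
    (hc : c ∈ Set.Ioo 0 (cCrit m)) (hcbar : cbar ∈ Set.Ioc 0 c)
    (hC : 0 < C) (hCbound : ∀ x ∈ Set.Icc (-1:ℝ) 0, C ≤ (1 - x^2)^2 - x^3)
    (hs₁0 : 0 ≤ s₁) (hs₁ : s₁ ≤ 1/(3*Real.sqrt 2))
    (Rc : ℝ → ℝ)
    (hRc : ∀ s, 0 < Rc s ∧ phi m (Rc s) = c^2/4 * (s^2 - 1))
    (h : ℝ → ℝ)
    (hrange : ∀ s ∈ Set.Icc (0:ℝ) s₁, h s ∈ Set.Icc (-1:ℝ) 0)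
    (hsol : ∀ s ∈ Set.Icc (0:ℝ) s₁,
      HasDerivWithinAt h (Fc m c s (Rc s) (h s)) (Set.Icc (0:ℝ) s₁) s)
    (hinit : h 0 = 0) :
    ∀ s ∈ Set.Icc (0:ℝ) s₁,
      h s ≤ ((cbar^2 * Real.sqrt m *
              min 1 ((1 - 1/(3*Real.sqrt 2)) / (8 * m^((3:ℝ)/2)))) * C /
            (2 * Real.sqrt 2 * m)) *
          Real.log (Real.sqrt (Real.exp 1 * m * ((cCrit m)^2 - c^2)) /
            (2 * Real.sqrt 2 * m * s +
              Real.sqrt (Real.exp 1 * m * ((cCrit m)^2 - c^2)))) := by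
  obtain ⟨hc0, hc1⟩ := hc
  have hδ : 0 < Real.sqrt (Real.exp 1 * m * ((cCrit m)^2 - c^2)) := by
    rw [exp_one_mul_cCrit_sq_sub hm]
    refine Real.sqrt_pos.2 ?_
    nlinarith [exp_one_mul_sq_lt hc0 hc1]
  refine le_log_of_hasDerivWithinAt_le (by positivity) hδ hsol (fun s hs => ?_) hinit
  obtain ⟨hr, hphi⟩ := hRc s
  have h2 : (1 : ℝ) ≤ √2 := Real.one_le_sqrt.2 (by norm_num)
  have hk : 1 / (3 * √2) < 1 := by
    rw [div_lt_one (by positivity)]; linarith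
  have hs1 : s ≤ 1 / (3 * √2) := hs.2.trans hs₁
  have hr2 : Rc s ≤ 2 * m := by
    refine (lt_two_mul_of_phi_neg ?_).le
    rw [hphi]
    exact mul_neg_of_pos_of_neg (by positivity) (by nlinarith [hs.1])
  have hrδ := radius_le hm hc0 hc1 hs.1 hr hr2 hphi
  have hcub : 0 ≤ -h s ^ 3 := by
    have : 0 ≤ (-h s) ^ 3 := pow_nonneg (by linarith [(hrange s hs).2]) 3
    linarith [neg_pow (h s) 3]
  have hmin0 : 0 ≤ min 1 ((1 - 1 / (3 * √2)) / (8 * m ^ ((3 : ℝ) / 2))) :=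
    le_min zero_le_one (div_nonneg (by linarith) (by positivity))
  have hB := min_mul_le (k := 1 - 1 / (3 * √2)) hm (sq_nonneg (1 - h s ^ 2)) hcub
  refine (Fc_le c hm hs.1 hs1 hr hr2 (hrange s hs)).trans (neg_le_neg ?_)
  set μ := min 1 ((1 - 1 / (3 * √2)) / (8 * m ^ ((3 : ℝ) / 2)))
  have hCB : √m * μ * C ≤ √m * (1 - h s ^ 2) ^ 2 + (1 - 1 / (3 * √2)) / (8 * m) * (-h s ^ 3) :=
    (mul_le_mul_of_nonneg_left (by linarith [hCbound _ (hrange s hs)]) (by positivity)).trans hB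
  have hcc : cbar ^ 2 ≤ c ^ 2 := pow_le_pow_left₀ hcbar.1.le hcbar.2 2
  have hnum : cbar ^ 2 * √m * μ * C ≤
      c ^ 2 * (√m * (1 - h s ^ 2) ^ 2 + (1 - 1 / (3 * √2)) / (8 * m) * (-h s ^ 3)) := by
    calc cbar ^ 2 * √m * μ * C = cbar ^ 2 * (√m * μ * C) := by ring
      _ ≤ _ := mul_le_mul hcc hCB (by positivity) (by positivity)
  rw [← mul_div_assoc]
  exact div_le_div₀ (le_trans (by positivity) hnum) hnum hr hrδ
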